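/- Let n ≥ 3 and let Θ be the alternating F-bilinear map on the special algebra S(n) which vanishes on pairs of homogeneous elements unless both have degree −1 and satisfies Θ(D_i, D_j) = D_{ij}(x^τ) for all i < j. Then Θ is a 2-cocycle of S(n) with adjoint coefficients, and Θ is not a 2-coboundary. -/

import Mathlib

/-!
Write `f = x^τ` and consider the linear map `x ↦ -f • x` of `W(n)`. Its coboundary is
`T(x, y) = y(f) • x - x(f) • y - f • ⁅x, y⁆` (`cobT`), and the cocycle identity for `T` holds
automatically. The map `Θ` is the restriction of `T` to `S(n)`; the cochain `x ↦ -f • x`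
itself does not preserve `S(n)`, which leaves room for `Θ` not to be a coboundary there.

To see that `Θ = T` on `S(n)`, recall that `S(n)` is spanned by the homogeneous elements
`D_{ij}(x^a)` (`Ssub_eq_span`): the bracket of divergence-free elements `∑ a_i D_i` and
`∑ b_j D_j` is `-∑ D_{ij}(a_i b_j)` (`lie_eq_sum_Dij`), and conversely `D_{ij}(x^a)` is a bracket
with some `D_k` when `a ≠ τ`, and the bracket of `x_i^{p-1} D_j` with `x^{τ-(p-1)ε_i} D_i` when
`a = τ`. On two elements of degree `-1`, both maps are determined by
`T(D_i, D_j) = D_{ij}(f)`. If one argument `x` is homogeneous of another degree, then `f • x = 0`,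
which together with `div x = 0` forces `T(x, y) = 0` (`cobT_eq_zero_left`).

Suppose `Θ` were the coboundary of a linear map `φ` preserving `S(n)`. Then
`D_{ij}(f) = ⁅D_i, φ(D_j)⁆ - ⁅D_j, φ(D_i)⁆`. The left side has a nonzero coefficient at
`x^{τ-ε_j} D_i`, whereas the right side could only produce it from the coefficient of `x^τ D_i` in
`φ(D_i)`, and elements of `S(n)` have no component in that degree (`coeffW_tau_of_mem`).
-/

set_option maxHeartbeats 1000000
set_option synthInstance.maxHeartbeats 400000

open scoped BigOperators
noncomputable section

variable (F : Type*) [Field F] (p n : ℕ)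

/-- The ideal `(X_1^p, …, X_n^p)` of the polynomial ring. -/
def truncIdeal : Ideal (MvPolynomial (Fin n) F) :=
  Ideal.span (Set.range fun i : Fin n => MvPolynomial.X i ^ p)

/-- The truncated polynomial algebra `A(n) = F[x_1,…,x_n]/(x_1^p,…,x_n^p)`. -/
abbrev TruncP := MvPolynomial (Fin n) F ⧸ truncIdeal F p n

/-- The monomial `x^a` in `A(n)`. -/
def xpow (a : Fin n → ℕ) : TruncP F p n :=
  Ideal.Quotient.mk _ (MvPolynomial.monomial (Finsupp.equivFunOnFinite.symm a) 1)

/-- Lift an `F`-linear map killing the truncation ideal to the quotient. -/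
def liftF {N : Type*} [AddCommGroup N] [Module F N]
    (f : MvPolynomial (Fin n) F →ₗ[F] N)
    (h : (truncIdeal F p n).restrictScalars F ≤ LinearMap.ker f) :
    TruncP F p n →ₗ[F] N :=
  (Submodule.liftQ ((truncIdeal F p n).restrictScalars F) f h) ∘ₗ
    (Submodule.Quotient.restrictScalarsEquiv F (truncIdeal F p n)).symm.toLinearMap

lemma liftF_mk {N : Type*} [AddCommGroup N] [Module F N]
    (f : MvPolynomial (Fin n) F →ₗ[F] N)
    (h : (truncIdeal F p n).restrictScalars F ≤ LinearMap.ker f)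
    (x : MvPolynomial (Fin n) F) :
    liftF F p n f h (Ideal.Quotient.mk _ x) = f x := by
  simp only [liftF, LinearMap.coe_comp, Function.comp_apply, LinearEquiv.coe_coe]
  have : (Ideal.Quotient.mk (truncIdeal F p n)) x = Submodule.Quotient.mk x := rfl
  rw [this, Submodule.Quotient.restrictScalarsEquiv_symm_mk, Submodule.liftQ_apply]

lemma truncIdeal_pderiv_mem [CharP F p] (j : Fin n) {f : MvPolynomial (Fin n) F}
    (hf : f ∈ truncIdeal F p n) :
    Ideal.Quotient.mk (truncIdeal F p n) (MvPolynomial.pderiv j f) = 0 := by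
  classical
  let K : Ideal (MvPolynomial (Fin n) F) :=
    { carrier := {g | Ideal.Quotient.mk (truncIdeal F p n) (MvPolynomial.pderiv j g) = 0 ∧
        Ideal.Quotient.mk (truncIdeal F p n) g = 0},
      add_mem' := by
        rintro a b ⟨ha1, ha2⟩ ⟨hb1, hb2⟩
        refine ⟨?_, ?_⟩
        · rw [map_add, map_add, ha1, hb1, add_zero]
        · rw [map_add, ha2, hb2, add_zero]
      zero_mem' := ⟨by rw [map_zero, map_zero], by rw [map_zero]⟩
      smul_mem' := by
        rintro c x ⟨hx1, hx2⟩
        refine ⟨?_, ?_⟩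
        · have hL : MvPolynomial.pderiv j (c * x)
              = c * MvPolynomial.pderiv j x + x * MvPolynomial.pderiv j c := by
            have := (MvPolynomial.pderiv j).leibniz c x
            simpa [smul_eq_mul, mul_comm] using this
          rw [smul_eq_mul, hL]
          rw [map_add, map_mul, map_mul, hx1, hx2, mul_zero, zero_mul, add_zero]
        · rw [smul_eq_mul, map_mul, hx2, mul_zero] }
  have hle : truncIdeal F p n ≤ K := by
    rw [truncIdeal, Ideal.span_le]
    rintro _ ⟨i, rfl⟩
    refine ⟨?_, ?_⟩
    · have hgen : MvPolynomial.pderiv j (MvPolynomial.X (R := F) i ^ p) = 0 := by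
        rw [MvPolynomial.X_pow_eq_monomial, MvPolynomial.pderiv_monomial]
        rcases eq_or_ne i j with h | h
        · subst h
          simp [Finsupp.single_apply, CharP.cast_eq_zero F p]
        · simp [Finsupp.single_apply, h]
      rw [hgen, map_zero]
    · exact Ideal.Quotient.eq_zero_iff_mem.mpr (Ideal.subset_span ⟨i, rfl⟩)
  exact (hle hf).1

lemma truncIdeal_support {f : MvPolynomial (Fin n) F} (hf : f ∈ truncIdeal F p n) :
    ∀ d ∈ f.support, ∃ i, p ≤ d i := by
  classical
  let K : Ideal (MvPolynomial (Fin n) F) :=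
    { carrier := {g | ∀ d ∈ g.support, ∃ i, p ≤ d i},
      add_mem' := by
        intro a b ha hb d hd
        rcases Finset.mem_union.mp (MvPolynomial.support_add hd) with h | h
        · exact ha d h
        · exact hb d h
      zero_mem' := by simp
      smul_mem' := by
        intro c x hx d hd
        rw [smul_eq_mul] at hd
        obtain ⟨d1, hd1, d2, hd2, rfl⟩ := Finset.mem_add.mp (MvPolynomial.support_mul c x hd)
        obtain ⟨i, hi⟩ := hx d2 hd2
        exact ⟨i, le_trans hi (by simp)⟩ }
  have hle : truncIdeal F p n ≤ K := by
    rw [truncIdeal, Ideal.span_le]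
    rintro _ ⟨i, rfl⟩ d hd
    simp only [MvPolynomial.X_pow_eq_monomial] at hd
    rw [MvPolynomial.support_monomial] at hd
    simp only [one_ne_zero, if_false] at hd
    rcases Finset.mem_singleton.mp hd with rfl
    exact ⟨i, by simp⟩
  exact hle hf

/-- The coefficient of `x^a` (for `a` componentwise `< p`) of an element of `A(n)`,
as a linear functional. For `a` not in the box this is defined to be `0`. -/
def coeffT (a : Fin n → ℕ) : TruncP F p n →ₗ[F] F :=
  if h : ∀ i, a i < p then
    liftF F p n
      { toFun := fun f => f.coeff (Finsupp.equivFunOnFinite.symm a),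
        map_add' := fun f g => MvPolynomial.coeff_add _ f g,
        map_smul' := fun c f => MvPolynomial.coeff_smul _ c f }
      (by
        intro f hf
        have hf' : f ∈ truncIdeal F p n := hf
        simp only [LinearMap.mem_ker, LinearMap.coe_mk, AddHom.coe_mk]
        by_contra hne
        have hmem : Finsupp.equivFunOnFinite.symm a ∈ f.support :=
          MvPolynomial.mem_support_iff.mpr hne
        obtain ⟨i, hi⟩ := truncIdeal_support F p n hf' _ hmem
        have heq : (Finsupp.equivFunOnFinite.symm a) i = a i := rfl
        have h2 := h i
        rw [heq] at hi
        omega)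
  else 0

/-- The Jacobson–Witt algebra `W(n) = Der_F A(n)`. -/
abbrev Witt := Derivation F (TruncP F p n) (TruncP F p n)

def DjL [CharP F p] (j : Fin n) : TruncP F p n →ₗ[F] TruncP F p n :=
  liftF F p n
    ((Ideal.Quotient.mkₐ F (truncIdeal F p n)).toLinearMap ∘ₗ (MvPolynomial.pderiv j).toLinearMap)
    (by
      intro f hf
      have hf' : f ∈ truncIdeal F p n := hf
      simp only [LinearMap.mem_ker, LinearMap.coe_comp, Function.comp_apply,
        AlgHom.toLinearMap_apply, Ideal.Quotient.mkₐ_eq_mk, Derivation.coeFn_coe]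
      exact truncIdeal_pderiv_mem F p n j hf')

lemma DjL_mk [CharP F p] (j : Fin n) (f : MvPolynomial (Fin n) F) :
    DjL F p n j (Ideal.Quotient.mk _ f) = Ideal.Quotient.mk _ (MvPolynomial.pderiv j f) := by
  rw [DjL, liftF_mk]
  simp

/-- The partial derivative `D_j = ∂/∂x_j`, as a derivation of `A(n)`. -/
def Dj [CharP F p] (j : Fin n) : Witt F p n where
  toLinearMap := DjL F p n j
  map_one_eq_zero' := by
    have h1 : (1 : TruncP F p n) = Ideal.Quotient.mk _ (1 : MvPolynomial (Fin n) F) :=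
      (map_one _).symm
    rw [LinearMap.coe_mk] at *
    show DjL F p n j 1 = 0
    rw [h1, DjL_mk]
    simp
  leibniz' := by
    intro a b
    obtain ⟨x, rfl⟩ := Ideal.Quotient.mk_surjective a
    obtain ⟨y, rfl⟩ := Ideal.Quotient.mk_surjective b
    show DjL F p n j _ = _ • DjL F p n j _ + _ • DjL F p n j _
    rw [← map_mul, DjL_mk, DjL_mk, DjL_mk, smul_eq_mul, smul_eq_mul, ← map_mul, ← map_mul,
      ← map_add]
    congr 1
    have := (MvPolynomial.pderiv j).leibniz x y
    simpa [smul_eq_mul] using this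
section Cochains

variable (F : Type*) [Field F] {L : Type*} [AddCommGroup L] [Module F L]

/-- A map of two arguments which is `F`-linear in each argument. -/
def IsBilinear (ψ : L → L → L) : Prop :=
  (∀ x, IsLinearMap F (ψ x)) ∧ ∀ y, IsLinearMap F fun x => ψ x y

/-- A 2-cochain with adjoint coefficients: an alternating `F`-bilinear map. -/
def IsCochain (ψ : L → L → L) : Prop :=
  IsBilinear F ψ ∧ ∀ x, ψ x x = 0

/-- A 2-cocycle with adjoint coefficients, for the bracket `B`. -/
def IsCocycle (B : L → L → L) (ψ : L → L → L) : Prop :=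
  IsCochain F ψ ∧ ∀ x y z,
    B x (ψ y z) - B y (ψ x z) + B z (ψ x y)
      - ψ (B x y) z + ψ (B x z) y - ψ (B y z) x = 0

/-- A 2-coboundary with adjoint coefficients, for the bracket `B`. -/
def IsCoboundary (B : L → L → L) (ψ : L → L → L) : Prop :=
  ∃ φ : L →ₗ[F] L, ∀ x y, ψ x y = B x (φ y) - B y (φ x) - φ (B x y)

/-- A 2-cocycle of a subspace `V` (closed under the bracket `B` of the ambient space),
with adjoint coefficients.  The cochain is recorded as an everywhere-defined bilinear
map preserving `V`; only its restriction to `V` is relevant. -/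
def IsCocycleOn (V : Submodule F L) (B : L → L → L) (ψ : L → L → L) : Prop :=
  IsBilinear F ψ ∧ (∀ x ∈ V, ∀ y ∈ V, ψ x y ∈ V) ∧ (∀ x ∈ V, ψ x x = 0) ∧
    ∀ x ∈ V, ∀ y ∈ V, ∀ z ∈ V,
      B x (ψ y z) - B y (ψ x z) + B z (ψ x y)
        - ψ (B x y) z + ψ (B x z) y - ψ (B y z) x = 0

/-- A 2-coboundary of a subspace `V`, with adjoint coefficients. -/
def IsCoboundaryOn (V : Submodule F L) (B : L → L → L) (ψ : L → L → L) : Prop :=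
  ∃ φ : L →ₗ[F] L, (∀ x ∈ V, φ x ∈ V) ∧
    ∀ x ∈ V, ∀ y ∈ V, ψ x y = B x (φ y) - B y (φ x) - φ (B x y)

/-- A derivation of a subspace `V` closed under the bracket `B`:
an `F`-linear map preserving `V` and satisfying the Leibniz rule on `V`. -/
def IsDerivationOn (V : Submodule F L) (B : L → L → L) (γ : L →ₗ[F] L) : Prop :=
  (∀ x ∈ V, γ x ∈ V) ∧ ∀ x ∈ V, ∀ y ∈ V, γ (B x y) = B (γ x) y + B x (γ y)

/-- An inner derivation of a subspace `V`: a map agreeing on `V` with `ad z = B z ·`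
for some `z ∈ V`. -/
def IsInnerOn (V : Submodule F L) (B : L → L → L) (δ : L → L) : Prop :=
  ∃ z ∈ V, ∀ y ∈ V, δ y = B z y

/-- An inner derivation: `δ = ad z = B z ·` for some `z`. -/
def IsInner (B : L → L → L) (δ : L → L) : Prop := ∃ z, ∀ y, δ y = B z y

/-- The squaring `Sq(γ)(x,y) = ∑_{i=1}^{p-1} [γ^i(x), γ^{p-i}(y)]/(i!·(p-i)!)`
of an operator `γ`, relative to the bracket `B`. -/
def Squaring (p : ℕ) (B : L → L → L) (γ : L → L) : L → L → L := fun x y =>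
  ∑ i ∈ Finset.Ioo 0 p,
    (((Nat.factorial i * Nat.factorial (p - i) : ℕ) : F))⁻¹ • B (γ^[i] x) (γ^[p - i] y)

/-- `Sq(z) := Sq(ad z)` for an element `z`. -/
def SqE (p : ℕ) (B : L → L → L) (z : L) : L → L → L :=
  Squaring F p B (fun y => B z y)

/-- The Hochschild operator
`H_ψ(x)(y) = ∑_{j=0}^{p-1} (ad x)^j (ψ(x, (ad x)^{p-1-j}(y))) − ψ(x^{[p]}, y)`,
for the bracket `B`, the 2-cochain `ψ`, and the chosen `p`-th power `xp` of `x`. -/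
def HOp (p : ℕ) (B : L → L → L) (ψ : L → L → L) (x xp : L) : L → L := fun y =>
  (∑ j ∈ Finset.range p, (fun z => B x z)^[j] (ψ x ((fun z => B x z)^[p - 1 - j] y)))
    - ψ xp y

end Cochains

section Special

variable (F : Type*) [Field F] (p n : ℕ) [CharP F p]

/-- The element `x^a D_j` of `W(n)`. -/
def xD (a : Fin n → ℕ) (j : Fin n) : Witt F p n := xpow F p n a • Dj F p n j

/-- `D_{ij}(f) = D_j(f)·D_i − D_i(f)·D_j ∈ W(n)`. -/
def Dij (i j : Fin n) (f : TruncP F p n) : Witt F p n :=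
  Dj F p n j f • Dj F p n i - Dj F p n i f • Dj F p n j

/-- The divergence `div(∑ f_i D_i) = ∑ D_i(f_i)`, i.e. `div(E) = ∑ D_i(E(x_i))`. -/
def divW (E : Witt F p n) : TruncP F p n :=
  ∑ i, Dj F p n i (E (xpow F p n (Pi.single i 1)))

/-- The special algebra `S(n) = [S'(n), S'(n)]`, the derived subalgebra of
`S'(n) = ker(div)`, as a subspace of `W(n)`. -/
def Ssub : Submodule F (Witt F p n) :=
  Submodule.span F
    {z | ∃ D E : Witt F p n, divW F p n D = 0 ∧ divW F p n E = 0 ∧ z = ⁅D, E⁆}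

/-- The multi-index `τ = (p−1, …, p−1)`. -/
def tauE : Fin n → ℕ := fun _ => p - 1

/-- The coefficient of the basis element `x^a D_i` of `W(n)` in `E ∈ W(n)`;
it equals the coefficient of `x^a` in `E(x_i)`. -/
def coeffW (a : Fin n → ℕ) (i : Fin n) (E : Witt F p n) : F :=
  coeffT F p n a (E (xpow F p n (Pi.single i 1)))

/-- The degree-`d` homogeneous component of `W(n)`, spanned by the `x^a D_j`
with `|a| − 1 = d`. -/
def Wgr (d : ℤ) : Submodule F (Witt F p n) :=
  Submodule.span F
    {E | ∃ (a : Fin n → ℕ) (j : Fin n),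
      (∀ i, a i < p) ∧ (∑ i, (a i : ℤ)) - 1 = d ∧ E = xD F p n a j}

end Special

section Helpers

/-! ### Monomials and derivations of the truncated polynomial algebra -/

/-- The generator `x_i` of `A(n)`, in the form used by `divW`. -/
abbrev xg (i : Fin n) : TruncP F p n := xpow F p n (Pi.single i 1)

lemma xg_eq (i : Fin n) : xg F p n i = Ideal.Quotient.mk _ (MvPolynomial.X i) := by
  classical
  simp only [xg, xpow, MvPolynomial.X]
  congr 2
  ext k
  simp [Finsupp.single_apply, Pi.single_apply, eq_comm]

lemma xpow_mul (a b : Fin n → ℕ) : xpow F p n a * xpow F p n b = xpow F p n (a + b) := by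
  simp only [xpow, ← map_mul, MvPolynomial.monomial_mul, one_mul]
  have h : Finsupp.equivFunOnFinite.symm a + Finsupp.equivFunOnFinite.symm b
      = Finsupp.equivFunOnFinite.symm (a + b) := by
    ext; simp
  rw [h]

lemma xpow_zero : xpow F p n 0 = 1 := by
  simp only [xpow]
  rw [show (Finsupp.equivFunOnFinite.symm (0 : Fin n → ℕ)) = 0 by ext; simp]
  exact map_one _

lemma xpow_eq_zero (a : Fin n → ℕ) (i : Fin n) (h : p ≤ a i) : xpow F p n a = 0 := by
  classical
  have hX : xpow F p n (Pi.single i p) = 0 := by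
    refine Ideal.Quotient.eq_zero_iff_mem.mpr (Ideal.subset_span ⟨i, ?_⟩)
    simp only [MvPolynomial.X_pow_eq_monomial]
    congr 2
    ext k
    simp [Finsupp.single_apply, Pi.single_apply, eq_comm]
  have ha : a = Pi.single i p + (a - Pi.single i p) := by
    ext k
    by_cases hk : k = i
    · subst hk; simp; omega
    · simp [hk]
  rw [ha, ← xpow_mul, hX, zero_mul]

/-- The monomials `x^a` with all exponents below `p` span `A(n)`. -/
lemma span_xpow : Submodule.span F {g | ∃ a : Fin n → ℕ, (∀ i, a i < p) ∧ g = xpow F p n a} = ⊤ := by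
  rw [eq_top_iff]
  rintro g -
  obtain ⟨q, rfl⟩ := Ideal.Quotient.mk_surjective g
  induction q using MvPolynomial.induction_on' with
  | monomial u c =>
    have h1 : Ideal.Quotient.mk (truncIdeal F p n) (MvPolynomial.monomial u c)
        = c • xpow F p n u := by
      simp only [xpow]
      rw [← Ideal.Quotient.mkₐ_eq_mk F, ← map_smul, MvPolynomial.smul_monomial]
      simp
    rw [h1]
    refine Submodule.smul_mem _ _ ?_
    by_cases h : ∀ i, u i < p
    · exact Submodule.subset_span ⟨u, h, rfl⟩
    · push Not at h
      obtain ⟨i, hi⟩ := h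
      rw [xpow_eq_zero F p n u i hi]
      exact zero_mem _
  | add a b ha hb => rw [map_add]; exact add_mem ha hb

lemma coeffT_xpow (a b : Fin n → ℕ) (ha : ∀ i, a i < p) :
    coeffT F p n a (xpow F p n b) = if b = a then 1 else 0 := by
  classical
  rw [coeffT, dif_pos ha, xpow, liftF_mk]
  simp [MvPolynomial.coeff_monomial]

/-- A derivation of `A(n)` is determined by its values on the generators. -/
lemma witt_ext {D E : Witt F p n} (h : ∀ i, D (xg F p n i) = E (xg F p n i)) : D = E := by
  ext g
  obtain ⟨q, rfl⟩ := Ideal.Quotient.mk_surjective g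
  induction q using MvPolynomial.induction_on with
  | C c =>
    have : Ideal.Quotient.mk (truncIdeal F p n) (MvPolynomial.C c)
        = algebraMap F (TruncP F p n) c := rfl
    rw [this, Derivation.map_algebraMap, Derivation.map_algebraMap]
  | add a b ha hb => rw [map_add, map_add, map_add, ha, hb]
  | mul_X q i hq => rw [map_mul, ← xg_eq, Derivation.leibniz, Derivation.leibniz, hq, h]

lemma witt_neg_eq (D : Witt F p n) : -D = (-1 : F) • D := by
  ext g; simp

lemma witt_sub_eq (D E : Witt F p n) : D - E = D + (-1 : F) • E := by
  ext g; simp [sub_eq_add_neg]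

/-! ### The coboundary of multiplication by the top monomial -/

/-- The coboundary of the linear map `x ↦ -x^τ • x` from `W(n)` to itself, written out with
`⁅x, f • y⁆ = x(f) • y + f • ⁅x, y⁆`. -/
def cobT (x y : Witt F p n) : Witt F p n :=
  y (xpow F p n (tauE p n)) • x - x (xpow F p n (tauE p n)) • y - xpow F p n (tauE p n) • ⁅x, y⁆

lemma cobT_swap (x y : Witt F p n) : cobT F p n x y = - cobT F p n y x := by
  ext g
  simp only [cobT, Derivation.sub_apply, Derivation.neg_apply, Derivation.smul_apply,
    Derivation.commutator_apply, smul_eq_mul]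
  ring

lemma cobT_add_left (x x' y : Witt F p n) :
    cobT F p n (x + x') y = cobT F p n x y + cobT F p n x' y := by
  ext g
  simp only [cobT, Derivation.sub_apply, Derivation.add_apply, Derivation.smul_apply,
    Derivation.commutator_apply, smul_eq_mul, map_add]
  ring

lemma cobT_smul_left (c : F) (x y : Witt F p n) :
    cobT F p n (c • x) y = c • cobT F p n x y := by
  have hs : ∀ z : TruncP F p n, c • z = algebraMap F (TruncP F p n) c * z :=
    fun z => Algebra.smul_def c z
  have hD : ∀ (D : Witt F p n) (z : TruncP F p n),
      D (algebraMap F (TruncP F p n) c * z) = algebraMap F (TruncP F p n) c * D z :=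
    fun D z => by rw [← hs, Derivation.map_smul, hs]
  ext g
  simp only [cobT, Derivation.sub_apply, Derivation.smul_apply,
    Derivation.commutator_apply, smul_eq_mul, hs, hD]
  ring

lemma cobT_zero_right (x : Witt F p n) : cobT F p n x 0 = 0 := by
  ext g
  simp [cobT, Derivation.commutator_apply]

lemma cobT_add_right (x y y' : Witt F p n) :
    cobT F p n x (y + y') = cobT F p n x y + cobT F p n x y' := by
  ext g
  simp only [cobT, Derivation.sub_apply, Derivation.add_apply, Derivation.smul_apply,
    Derivation.commutator_apply, smul_eq_mul, map_add]
  ring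

lemma cobT_smul_right (c : F) (x y : Witt F p n) :
    cobT F p n x (c • y) = c • cobT F p n x y := by
  have hs : ∀ z : TruncP F p n, c • z = algebraMap F (TruncP F p n) c * z :=
    fun z => Algebra.smul_def c z
  have hD : ∀ (D : Witt F p n) (z : TruncP F p n),
      D (algebraMap F (TruncP F p n) c * z) = algebraMap F (TruncP F p n) c * D z :=
    fun D z => by rw [← hs, Derivation.map_smul, hs]
  ext g
  simp only [cobT, Derivation.sub_apply, Derivation.smul_apply,
    Derivation.commutator_apply, smul_eq_mul, hs, hD]
  ring

lemma cobT_zero_left (y : Witt F p n) : cobT F p n 0 y = 0 := by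
  ext g
  simp [cobT, Derivation.commutator_apply]

/-! ### Partial derivatives and divergence -/

variable [CharP F p]

lemma Dj_xpow (j : Fin n) (a : Fin n → ℕ) :
    Dj F p n j (xpow F p n a) = (a j : F) • xpow F p n (a - Pi.single j 1) := by
  classical
  change DjL F p n j _ = _
  rw [xpow, DjL_mk, MvPolynomial.pderiv_monomial, xpow, ← Ideal.Quotient.mkₐ_eq_mk F, ← map_smul,
    MvPolynomial.smul_monomial]
  congr 1
  have : Finsupp.equivFunOnFinite.symm a - Finsupp.single j 1
      = Finsupp.equivFunOnFinite.symm (a - Pi.single j 1) := by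
    ext k
    simp [Finsupp.single_apply, Pi.single_apply, eq_comm]
  rw [this]
  simp

lemma Dj_xg (i j : Fin n) : Dj F p n j (xg F p n i) = if i = j then 1 else 0 := by
  classical
  rw [xg, Dj_xpow]
  by_cases h : i = j
  · subst h
    rw [if_pos rfl, tsub_self, xpow_zero]; simp
  · simp [h, Ne.symm h]

lemma sum_smul_Dj_apply (a : Fin n → TruncP F p n) (g : TruncP F p n) :
    (∑ i, a i • Dj F p n i) g = ∑ i, a i * Dj F p n i g := by
  rw [← Derivation.coeFnAddMonoidHom_apply, map_sum, Finset.sum_apply]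
  rfl

lemma witt_eq_sum (D : Witt F p n) : D = ∑ i, D (xg F p n i) • Dj F p n i := by
  refine witt_ext F p n fun k => ?_
  rw [sum_smul_Dj_apply]
  simp [Dj_xg]

lemma witt_apply (D : Witt F p n) (g : TruncP F p n) :
    D g = ∑ i, D (xg F p n i) * Dj F p n i g := by
  conv_lhs => rw [witt_eq_sum F p n D]
  rw [sum_smul_Dj_apply]

lemma Dj_lie (i j : Fin n) : ⁅Dj F p n i, Dj F p n j⁆ = 0 := by
  refine witt_ext F p n fun k => ?_
  rw [Derivation.commutator_apply, Dj_xg, Dj_xg]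
  split_ifs <;> simp

lemma Dj_comm (i j : Fin n) (g : TruncP F p n) :
    Dj F p n i (Dj F p n j g) = Dj F p n j (Dj F p n i g) := by
  have := congrArg (fun D : Witt F p n => D g) (Dj_lie F p n i j)
  simp only [Derivation.commutator_apply] at this
  exact sub_eq_zero.mp this

lemma divW_smul (f : TruncP F p n) (D : Witt F p n) :
    divW F p n (f • D) = f * divW F p n D + D f := by
  rw [witt_apply F p n D f, divW, divW, Finset.mul_sum, ← Finset.sum_add_distrib]
  refine Finset.sum_congr rfl fun i _ => ?_
  simp [Derivation.leibniz]

lemma divW_Dj (i : Fin n) : divW F p n (Dj F p n i) = 0 := by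
  refine Finset.sum_eq_zero fun k _ => ?_
  rw [Dj_xg]
  split_ifs <;> simp

lemma divW_sub (D E : Witt F p n) : divW F p n (D - E) = divW F p n D - divW F p n E := by
  simp [divW, Finset.sum_sub_distrib]

lemma divW_Dij (i j : Fin n) (f : TruncP F p n) : divW F p n (Dij F p n i j f) = 0 := by
  rw [Dij, divW_sub, divW_smul, divW_smul, divW_Dj, divW_Dj, Dj_comm F p n i j]
  simp

/-! ### The special algebra is spanned by the elements `D_{ij}(x^a)` -/

/-- `f ↦ D_{ij}(f)` as a linear map. -/
def DijL (i j : Fin n) : TruncP F p n →ₗ[F] Witt F p n where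
  toFun := Dij F p n i j
  map_add' f g := by simp only [Dij, map_add, add_smul]; abel
  map_smul' c f := by
    ext g
    simp [Dij, smul_sub]

/-- The bracket of two divergence-free derivations `∑ a_i D_i` and `∑ b_j D_j` is
`-∑ D_{ij}(a_i b_j)`. -/
lemma lie_eq_sum_Dij (D E : Witt F p n) (hD : divW F p n D = 0) (hE : divW F p n E = 0) :
    ⁅D, E⁆ = -∑ i, ∑ j, Dij F p n i j (D (xg F p n i) * E (xg F p n j)) := by
  refine witt_ext F p n fun k => ?_
  have hsum : (∑ i, ∑ j, Dij F p n i j (D (xg F p n i) * E (xg F p n j))) (xg F p n k)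
      = ∑ i, ∑ j, Dij F p n i j (D (xg F p n i) * E (xg F p n j)) (xg F p n k) := by
    rw [← Derivation.coeFnAddMonoidHom_apply]
    simp only [map_sum, Finset.sum_apply, Derivation.coeFnAddMonoidHom_apply]
  have hterm : ∀ i j, Dij F p n i j (D (xg F p n i) * E (xg F p n j)) (xg F p n k)
      = (if k = i then Dj F p n j (D (xg F p n i) * E (xg F p n j)) else 0)
        - (if k = j then Dj F p n i (D (xg F p n i) * E (xg F p n j)) else 0) := by
    intro i j
    simp only [Dij, Derivation.sub_apply, Derivation.smul_apply, Dj_xg, smul_eq_mul, mul_ite,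
      mul_one, mul_zero]
  rw [Derivation.neg_apply, hsum, Derivation.commutator_apply]
  simp only [hterm, Finset.sum_sub_distrib, Finset.sum_ite_eq, Finset.mem_univ, if_true]
  rw [Finset.sum_comm]
  simp only [Finset.sum_ite_eq, Finset.mem_univ, if_true]
  rw [witt_apply F p n D (E _), witt_apply F p n E (D _)]
  simp only [Derivation.leibniz, smul_eq_mul, Finset.sum_add_distrib, ← Finset.mul_sum]
  have h1 : ∑ i, Dj F p n i (D (xg F p n i)) = 0 := hD
  have h2 : ∑ i, Dj F p n i (E (xg F p n i)) = 0 := hE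
  rw [h1, h2]
  ring

lemma lie_mem_Ssub {D E : Witt F p n} (hD : divW F p n D = 0) (hE : divW F p n E = 0) :
    ⁅D, E⁆ ∈ Ssub F p n :=
  Submodule.subset_span ⟨D, E, hD, hE, rfl⟩

lemma Dij_self (i : Fin n) (f : TruncP F p n) : Dij F p n i i f = 0 := by
  ext g; simp [Dij]

lemma Dij_swap (i j : Fin n) (f : TruncP F p n) : Dij F p n i j f = - Dij F p n j i f := by
  ext g; simp [Dij]

lemma lie_Dj_Dij (k i j : Fin n) (f : TruncP F p n) :
    ⁅Dj F p n k, Dij F p n i j f⁆ = Dij F p n i j (Dj F p n k f) := by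
  refine witt_ext F p n fun l => ?_
  simp only [Derivation.commutator_apply, Dij, Derivation.sub_apply, Derivation.smul_apply, Dj_xg,
    smul_eq_mul, mul_ite, mul_one, mul_zero, map_sub]
  rw [Dj_comm F p n i k, Dj_comm F p n j k]
  split_ifs <;> simp

/-- The top element `D_{ij}(x^τ)` is the bracket of the divergence-free elements
`x_i^{p-1} D_j` and `x^{τ-(p-1)ε_i} D_i`. -/
lemma Dij_tau_mem (i j : Fin n) :
    Dij F p n i j (xpow F p n (tauE p n)) ∈ Ssub F p n := by
  classical
  by_cases hij : i = j
  · subst hij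
    rw [Dij_self]; exact zero_mem _
  set u : Fin n → ℕ := Pi.single i (p - 1) with hu
  set v : Fin n → ℕ := tauE p n - Pi.single i (p - 1) with hv
  have huv : xpow F p n (tauE p n) = xpow F p n u * xpow F p n v := by
    rw [xpow_mul]
    congr 1
    ext k
    by_cases hk : k = i
    · subst hk; simp [hu, hv, tauE]
    · simp [hu, hv, hk, tauE]
  have h1 : Dj F p n j (xpow F p n u) = 0 := by rw [Dj_xpow]; simp [hu, Ne.symm hij]
  have h2 : Dj F p n i (xpow F p n v) = 0 := by rw [Dj_xpow]; simp [hv, tauE]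
  have key : Dij F p n i j (xpow F p n (tauE p n))
      = ⁅xpow F p n u • Dj F p n j, xpow F p n v • Dj F p n i⁆ := by
    refine witt_ext F p n fun l => ?_
    rw [huv, Derivation.commutator_apply]
    simp only [Dij, Derivation.sub_apply, Derivation.smul_apply, Dj_xg, Derivation.leibniz, h1, h2,
      smul_eq_mul, mul_ite, mul_one, mul_zero]
    split_ifs <;> simp
  rw [key]
  apply lie_mem_Ssub
  · rw [divW_smul, divW_Dj, h1]; simp
  · rw [divW_smul, divW_Dj, h2]; simp

lemma Dij_xpow_mem (i j : Fin n) (a : Fin n → ℕ) (ha : ∀ k, a k < p) :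
    Dij F p n i j (xpow F p n a) ∈ Ssub F p n := by
  classical
  by_cases hat : a = tauE p n
  · rw [hat]; exact Dij_tau_mem F p n i j
  -- Below the top monomial some exponent can be raised, so `x^a` is a partial derivative.
  obtain ⟨k, hk⟩ : ∃ k, a k ≠ p - 1 := by
    by_contra! h
    exact hat (funext h)
  have hak : a k + 1 < p := by have := ha k; omega
  have hne : ((a k + 1 : ℕ) : F) ≠ 0 := by
    rw [Ne, CharP.cast_eq_zero_iff F p]
    exact Nat.not_dvd_of_pos_of_lt (by omega) hak
  have h1 : Dj F p n k (xpow F p n (a + Pi.single k 1)) = ((a k + 1 : ℕ) : F) • xpow F p n a := by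
    rw [Dj_xpow, add_tsub_cancel_right]
    simp
  have h2 : xpow F p n a
      = Dj F p n k ((((a k + 1 : ℕ) : F)⁻¹) • xpow F p n (a + Pi.single k 1)) := by
    rw [Derivation.map_smul, h1, smul_smul, inv_mul_cancel₀ hne, one_smul]
  rw [h2, ← lie_Dj_Dij]
  exact lie_mem_Ssub F p n (divW_Dj F p n k) (divW_Dij F p n i j _)

/-- `S(n)` is spanned by the homogeneous elements `D_{ij}(x^a)`. -/
lemma Ssub_eq_span :
    Ssub F p n = Submodule.span F {E | ∃ (i j : Fin n) (a : Fin n → ℕ),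
      (∀ k, a k < p) ∧ E = Dij F p n i j (xpow F p n a)} := by
  apply le_antisymm
  · rw [Ssub, Submodule.span_le]
    rintro _ ⟨D, E, hD, hE, rfl⟩
    rw [lie_eq_sum_Dij F p n D E hD hE]
    rw [witt_neg_eq]
    refine Submodule.smul_mem _ _ (sum_mem fun i _ => sum_mem fun j _ => ?_)
    generalize D (xg F p n i) * E (xg F p n j) = g
    have hg : g ∈ Submodule.span F {g | ∃ a : Fin n → ℕ, (∀ i, a i < p) ∧ g = xpow F p n a} := by
      rw [span_xpow]; trivial
    have := Submodule.mem_map_of_mem (f := DijL F p n i j) hg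
    rw [Submodule.map_span] at this
    refine Submodule.span_mono ?_ this
    rintro _ ⟨_, ⟨a, ha, rfl⟩, rfl⟩
    exact ⟨i, j, a, ha, rfl⟩
  · rw [Submodule.span_le]
    rintro _ ⟨i, j, a, ha, rfl⟩
    exact Dij_xpow_mem F p n i j a ha

lemma divW_of_mem {x : Witt F p n} (hx : x ∈ Ssub F p n) : divW F p n x = 0 := by
  rw [Ssub_eq_span F p n] at hx
  induction hx using Submodule.span_induction with
  | mem x hx => obtain ⟨i, j, a, -, rfl⟩ := hx; exact divW_Dij F p n i j _
  | zero => simp [divW]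
  | add x y _ _ hx hy =>
    have : divW F p n (x + y) = divW F p n x + divW F p n y := by
      simp [divW, Finset.sum_add_distrib]
    rw [this, hx, hy, add_zero]
  | smul c x _ hx =>
    have : divW F p n (c • x) = c • divW F p n x := by
      simp [divW, Finset.smul_sum]
    rw [this, hx, smul_zero]

/-! ### Homogeneous components -/

lemma Dij_xpow_mem_Wgr (i j : Fin n) (a : Fin n → ℕ) (ha : ∀ k, a k < p) :
    Dij F p n i j (xpow F p n a) ∈ Wgr F p n ((∑ k, (a k : ℤ)) - 2) := by
  classical
  have key : ∀ k l : Fin n, Dj F p n k (xpow F p n a) • Dj F p n l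
      ∈ Wgr F p n ((∑ k, (a k : ℤ)) - 2) := by
    intro k l
    rw [Dj_xpow, smul_assoc]
    by_cases h0 : a k = 0
    · rw [h0]; simp
    refine Submodule.smul_mem _ _ (Submodule.subset_span ⟨a - Pi.single k 1, l, ?_, ?_, rfl⟩)
    · intro m
      exact lt_of_le_of_lt (Nat.sub_le _ _) (ha m)
    · have : ∀ m, (((a - Pi.single k 1 : Fin n → ℕ) m : ℕ) : ℤ) = (a m : ℤ) - if m = k then 1 else 0 := by
        intro m
        by_cases hm : m = k
        · subst hm; simp; omega
        · simp [hm]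
      simp only [this, Finset.sum_sub_distrib]
      simp
      ring
  rw [Dij, witt_sub_eq]
  exact add_mem (key j i) (Submodule.smul_mem _ _ (key i j))

/-- Multiplication by `x^τ` kills the homogeneous elements of degree other than `-1`. -/
lemma tau_smul_eq_zero (c : ℤ) (hc : c ≠ -1) (x : Witt F p n) (hx : x ∈ Wgr F p n c) : xpow F p n (tauE p n) • x = 0 := by
  induction hx using Submodule.span_induction with
  | mem x hx =>
    obtain ⟨a, j, -, hs, rfl⟩ := hx
    obtain ⟨k, hk⟩ : ∃ k, a k ≠ 0 := by
      by_contra! h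
      apply hc
      rw [← hs]
      simp [h]
    have h0 : xpow F p n (tauE p n) * xpow F p n a = 0 := by
      rw [xpow_mul]
      refine xpow_eq_zero F p n _ k ?_
      simp only [Pi.add_apply, tauE]
      omega
    ext g
    simp only [xD, Derivation.smul_apply, smul_eq_mul, ← mul_assoc, h0, zero_mul,
      Derivation.zero_apply]
  | zero => simp
  | add x y _ _ hx hy => rw [smul_add, hx, hy, add_zero]
  | smul c x _ hx => rw [smul_comm, hx, smul_zero]

lemma Wgr_neg_one_le : Wgr F p n (-1) ≤ Submodule.span F (Set.range (Dj F p n)) := by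
  rw [Wgr, Submodule.span_le]
  rintro _ ⟨a, j, -, hs, rfl⟩
  have h0 : a = 0 := by
    have h : ∑ i, (a i : ℤ) = 0 := by omega
    rw [Finset.sum_eq_zero_iff_of_nonneg (fun _ _ => by positivity)] at h
    funext i
    exact_mod_cast h i (Finset.mem_univ i)
  rw [h0, xD, xpow_zero, one_smul]
  exact Submodule.subset_span ⟨j, rfl⟩

/-- If `x^τ • x = 0` and `div x = 0`, then also `x(x^τ) = div (x^τ • x) - x^τ • div x = 0`, and
applying `y` to the relation `x^τ * x(g) = 0` cancels the remaining terms of `cobT x y`. -/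
lemma cobT_eq_zero_left {x y : Witt F p n} (hx : xpow F p n (tauE p n) • x = 0)
    (hd : divW F p n x = 0) : cobT F p n x y = 0 := by
  have h1 : x (xpow F p n (tauE p n)) = 0 := by
    have := divW_smul F p n (xpow F p n (tauE p n)) x
    rw [hx, hd, mul_zero, zero_add] at this
    rw [← this]; simp [divW]
  have h2 : ∀ g, xpow F p n (tauE p n) * x g = 0 := fun g => by
    have := congrArg (fun D : Witt F p n => D g) hx
    simpa using this
  ext g
  have h3 := congrArg y (h2 g)
  have h4 := h2 (y g)
  simp only [Derivation.leibniz, smul_eq_mul, map_zero] at h3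
  simp only [cobT, h1, Derivation.sub_apply, Derivation.smul_apply, Derivation.commutator_apply,
    smul_eq_mul, Derivation.zero_apply, zero_mul]
  linear_combination h3 - h4

lemma cobT_Dj (i j : Fin n) :
    cobT F p n (Dj F p n i) (Dj F p n j) = Dij F p n i j (xpow F p n (tauE p n)) := by
  ext g
  simp [cobT, Dj_lie, Dij]

/-! ### The top coefficient -/

/-- `D_j` never produces the monomial `x^τ`. -/
lemma coeffT_tau_Dj (hp : p.Prime) (j : Fin n) (g : TruncP F p n) :
    coeffT F p n (tauE p n) (Dj F p n j g) = 0 := by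
  classical
  have hpos := hp.pos
  have hg : g ∈ Submodule.span F {g | ∃ a : Fin n → ℕ, (∀ i, a i < p) ∧ g = xpow F p n a} := by
    rw [span_xpow]; trivial
  induction hg using Submodule.span_induction with
  | mem g hg =>
    obtain ⟨a, ha, rfl⟩ := hg
    rw [Dj_xpow, map_smul, coeffT_xpow F p n _ _ (fun i => by simp only [tauE]; omega), if_neg,
      smul_zero]
    intro h
    have h1 := congrFun h j
    have h2 := ha j
    have h3 := hp.two_le
    simp only [Pi.sub_apply, Pi.single_eq_same, tauE] at h1
    omega
  | zero => simp
  | add x y _ _ hx hy => rw [map_add, map_add, hx, hy, add_zero]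
  | smul c x _ hx => rw [Derivation.map_smul, map_smul, hx, smul_zero]

/-- Elements of `S(n)` have no component in the top degree `|τ| - 1` of `W(n)`. -/
lemma coeffW_tau_of_mem (hp : p.Prime) (i : Fin n) {x : Witt F p n} (hx : x ∈ Ssub F p n) :
    coeffT F p n (tauE p n) (x (xg F p n i)) = 0 := by
  rw [Ssub_eq_span F p n] at hx
  induction hx using Submodule.span_induction with
  | mem x hx =>
    obtain ⟨k, l, a, -, rfl⟩ := hx
    simp only [Dij, Derivation.sub_apply, Derivation.smul_apply, Dj_xg, smul_eq_mul, mul_ite,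
      mul_one, mul_zero, map_sub]
    split_ifs <;> simp [coeffT_tau_Dj F p n hp]
  | zero => simp
  | add x y _ _ hx hy => rw [Derivation.add_apply, map_add, hx, hy, add_zero]
  | smul c x _ hx => rw [Derivation.smul_apply, map_smul, hx, smul_zero]

/-! ### Reduction to generators -/

lemma Dj_mem_Ssub (hp : p.Prime) (hn : 3 ≤ n) (i : Fin n) : Dj F p n i ∈ Ssub F p n := by
  classical
  have : Nontrivial (Fin n) := Fin.nontrivial_iff_two_le.mpr (by omega)
  obtain ⟨j, hj⟩ := exists_ne i
  have h := Dij_xpow_mem F p n i j (Pi.single j 1) (fun k => by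
    have := hp.two_le
    by_cases hk : k = j
    · subst hk; simp; omega
    · simp [hk]; omega)
  have h2 : Dij F p n i j (xg F p n j) = Dj F p n i := by
    ext g
    simp [Dij, Dj_xg, hj]
  rwa [← h2]

/-- Agreement with `cobT`, together with membership of the values in `S(n)`, extends bilinearly
from a set to its span. -/
lemma bilinear_ext_Ssub {Θ : Witt F p n → Witt F p n → Witt F p n} (hbil : IsBilinear F Θ)
    {s : Set (Witt F p n)}
    (h : ∀ x ∈ s, ∀ y ∈ s, Θ x y = cobT F p n x y ∧ Θ x y ∈ Ssub F p n)
    {x y : Witt F p n} (hx : x ∈ Submodule.span F s) (hy : y ∈ Submodule.span F s) :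
    Θ x y = cobT F p n x y ∧ Θ x y ∈ Ssub F p n := by
  have h1 : ∀ x ∈ s, Θ x y = cobT F p n x y ∧ Θ x y ∈ Ssub F p n := by
    intro x hx
    induction hy using Submodule.span_induction with
    | mem y hy => exact h x hx y hy
    | zero =>
      rw [(hbil.1 x).map_zero, cobT_zero_right]
      simp
    | add y z _ _ hy hz =>
      rw [(hbil.1 x).map_add, cobT_add_right]
      exact ⟨by rw [hy.1, hz.1], add_mem hy.2 hz.2⟩
    | smul c y _ hy =>
      rw [(hbil.1 x).map_smul, cobT_smul_right]
      exact ⟨by rw [hy.1], Submodule.smul_mem _ _ hy.2⟩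
  induction hx using Submodule.span_induction with
  | mem x hx => exact h1 x hx
  | zero =>
    rw [(hbil.2 y).map_zero, cobT_zero_left]
    simp
  | add x z _ _ hx hz =>
    rw [(hbil.2 y).map_add, cobT_add_left]
    exact ⟨by rw [hx.1, hz.1], add_mem hx.2 hz.2⟩
  | smul c x _ hx =>
    rw [(hbil.2 y).map_smul, cobT_smul_left]
    exact ⟨by rw [hx.1], Submodule.smul_mem _ _ hx.2⟩

end Helpers

/-- The map `Θ` of `S(n)` (with `Θ(D_i, D_j) = D_{ij}(x^τ)` for `i < j`, vanishing on
pairs of homogeneous elements not both of degree `−1`) is a 2-cocycle of `S(n)` with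
adjoint coefficients, and is not a 2-coboundary. -/
theorem special_theta_cocycle_not_coboundary
    (p n : ℕ) (hp : p.Prime) (hp5 : 5 ≤ p) (hn : 3 ≤ n)
    (F : Type*) [Field F] [IsAlgClosed F] [CharP F p]
    (Θ : Witt F p n → Witt F p n → Witt F p n)
    (hbil : IsBilinear F Θ)
    (halt : ∀ x, Θ x x = 0)
    (hval : ∀ i j : Fin n, i < j →
      Θ (Dj F p n i) (Dj F p n j) = Dij F p n i j (xpow F p n (tauE p n)))
    (hvan : ∀ c d : ℤ, ¬(c = -1 ∧ d = -1) →
      ∀ x ∈ Wgr F p n c, x ∈ Ssub F p n →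
      ∀ y ∈ Wgr F p n d, y ∈ Ssub F p n → Θ x y = 0) :
    IsCocycleOn F (Ssub F p n) (fun x y => ⁅x, y⁆) Θ
      ∧ ¬ IsCoboundaryOn F (Ssub F p n) (fun x y => ⁅x, y⁆) Θ := by
  have hΘD : ∀ i j, Θ (Dj F p n i) (Dj F p n j) = Dij F p n i j (xpow F p n (tauE p n)) := by
    intro i j
    rcases lt_trichotomy i j with h | h | h
    · exact hval i j h
    · subst h; rw [halt, Dij_self]
    · have h0 := halt (Dj F p n i + Dj F p n j)
      rw [(hbil.1 _).map_add, (hbil.2 _).map_add, (hbil.2 _).map_add, halt, halt, zero_add,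
        add_zero, hval j i h] at h0
      rw [Dij_swap]
      ext g
      have h1 := congrArg (fun D : Witt F p n => D g) h0
      simp only [Derivation.add_apply, Derivation.zero_apply] at h1
      rw [Derivation.neg_apply]
      linear_combination h1
  have hΘ : ∀ x ∈ Ssub F p n, ∀ y ∈ Ssub F p n,
      Θ x y = cobT F p n x y ∧ Θ x y ∈ Ssub F p n := by
    intro x hx y hy
    rw [Ssub_eq_span F p n] at hx hy
    refine bilinear_ext_Ssub F p n hbil ?_ hx hy
    rintro _ ⟨i, j, a, ha, rfl⟩ _ ⟨k, l, b, hb, rfl⟩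
    have hx1 := Dij_xpow_mem_Wgr F p n i j a ha
    have hy1 := Dij_xpow_mem_Wgr F p n k l b hb
    by_cases hcd : (∑ k, (a k : ℤ)) - 2 = -1 ∧ (∑ k, (b k : ℤ)) - 2 = -1
    · rw [hcd.1] at hx1
      rw [hcd.2] at hy1
      refine bilinear_ext_Ssub F p n hbil ?_ (Wgr_neg_one_le F p n hx1) (Wgr_neg_one_le F p n hy1)
      rintro _ ⟨i, rfl⟩ _ ⟨j, rfl⟩
      rw [hΘD, cobT_Dj]
      exact ⟨rfl, Dij_tau_mem F p n i j⟩
    · rw [hvan _ _ hcd _ hx1 (Dij_xpow_mem F p n i j a ha) _ hy1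
        (Dij_xpow_mem F p n k l b hb)]
      refine ⟨Eq.symm ?_, zero_mem _⟩
      rcases not_and_or.mp hcd with hc | hc
      · exact cobT_eq_zero_left F p n (tau_smul_eq_zero F p n _ hc _ hx1) (divW_Dij F p n i j _)
      · rw [cobT_swap, cobT_eq_zero_left F p n (tau_smul_eq_zero F p n _ hc _ hy1)
          (divW_Dij F p n k l _)]
        ext g; simp
  have hlie : ∀ x ∈ Ssub F p n, ∀ y ∈ Ssub F p n, ⁅x, y⁆ ∈ Ssub F p n := fun x hx y hy =>
    lie_mem_Ssub F p n (divW_of_mem F p n hx) (divW_of_mem F p n hy)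
  refine ⟨⟨hbil, fun x hx y hy => (hΘ x hx y hy).2, fun x _ => halt x, ?_⟩, ?_⟩
  · intro x hx y hy z hz
    simp only
    rw [(hΘ y hy z hz).1, (hΘ x hx z hz).1, (hΘ x hx y hy).1, (hΘ _ (hlie x hx y hy) z hz).1,
      (hΘ _ (hlie x hx z hz) y hy).1, (hΘ _ (hlie y hy z hz) x hx).1]
    ext g
    simp only [cobT, Derivation.sub_apply, Derivation.add_apply, Derivation.smul_apply,
      Derivation.commutator_apply, smul_eq_mul, map_sub, Derivation.leibniz, Derivation.zero_apply]
    ring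
  · rintro ⟨φ, hφ, hcob⟩
    have : Nontrivial (Fin n) := Fin.nontrivial_iff_two_le.mpr (by omega)
    obtain ⟨i, j, hij⟩ := exists_pair_ne (Fin n)
    have hi := hφ _ (Dj_mem_Ssub F p n hp hn i)
    have h := hcob _ (Dj_mem_Ssub F p n hp hn i) _ (Dj_mem_Ssub F p n hp hn j)
    simp only at h
    rw [hΘD, Dj_lie, map_zero] at h
    -- Compare the coefficients of `x^{τ-ε_j} D_i`, read off as the coefficient of `x^τ`
    -- after multiplication by `x_j`.
    have h1 := congrArg (fun D : Witt F p n => xg F p n j * D (xg F p n i)) h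
    have hji : j ≠ i := Ne.symm hij
    simp only [Dij, Derivation.sub_apply, Derivation.smul_apply, Derivation.commutator_apply,
      Derivation.zero_apply, Dj_xg, smul_eq_mul, if_true, if_neg hij, mul_one, mul_zero, sub_zero] at h1
    have e1 : Dj F p n j (xg F p n j * xpow F p n (tauE p n))
        = xg F p n j * Dj F p n j (xpow F p n (tauE p n)) + xpow F p n (tauE p n) := by
      rw [Derivation.leibniz, Dj_xg]; simp
    have e2 : Dj F p n i (xg F p n j * φ (Dj F p n j) (xg F p n i))
        = xg F p n j * Dj F p n i (φ (Dj F p n j) (xg F p n i)) := by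
      rw [Derivation.leibniz, Dj_xg]; simp [hji]
    have e3 : Dj F p n j (xg F p n j * φ (Dj F p n i) (xg F p n i))
        = xg F p n j * Dj F p n j (φ (Dj F p n i) (xg F p n i)) + φ (Dj F p n i) (xg F p n i) := by
      rw [Derivation.leibniz, Dj_xg]; simp
    have h2 : Dj F p n j (xg F p n j * xpow F p n (tauE p n)) - xpow F p n (tauE p n)
        = Dj F p n i (xg F p n j * φ (Dj F p n j) (xg F p n i))
          - (Dj F p n j (xg F p n j * φ (Dj F p n i) (xg F p n i))
            - φ (Dj F p n i) (xg F p n i)) := by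
      rw [e1, e2, e3]
      simp at h1
      linear_combination h1
    have h3 := congrArg (coeffT F p n (tauE p n)) h2
    have hpos := hp.pos
    simp only [map_sub, coeffT_tau_Dj F p n hp, coeffW_tau_of_mem F p n hp i hi,
      coeffT_xpow F p n (tauE p n) (tauE p n) (fun i => by simp only [tauE]; omega)] at h3
    simp at h3
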